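/- arXiv:1402.1373 — 6 statements merged into one kernel-verified Lean document; each statement's English description precedes it below -/
import Mathlib

section
/- Every eigenvalue of R(b) is either equal to zero or equal to n(A1+A2)/2 ± h(b), where h(b) = (1/2)·√( (n² − 4·C(n,2))·(A1+A2)² + κ(b) ), C(n,2) = n(n−1)/2 is the binomial coefficient, and κ(b) = 4·Σ_{p<q} ( A1² + A2² + 2A1A2·cos(2π·φ_{pq}·(b·s0)) ). (Proposition 1, second part.) -/
/-- The extrapolated visibility matrix `R(b)` of a regularly-spaced array. -/
noncomputable def Rmat (n : ℕ) (φ : Fin n → ℤ) (A1 A2 l0 m0 : ℝ) (b : ℝ × ℝ) :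
    Matrix (Fin n) (Fin n) ℂ :=
  Matrix.of fun p q =>
    (A1 : ℂ) + (A2 : ℂ) *
      Complex.exp (-2 * (Real.pi : ℂ) * Complex.I * ((φ q - φ p : ℤ) : ℂ) *
        ((b.1 * l0 + b.2 * m0 : ℝ) : ℂ))

theorem sum_symm_aux (n : ℕ) (g : Fin n → Fin n → ℝ) (hg : ∀ p q, g p q = g q p) :
    ∑ p, ∑ q, g p q = ∑ p, g p p + 2 * ∑ p, ∑ q, if p < q then g p q else 0 := by
  have h1 : ∀ p q, g p q = (if p = q then g p q else 0) + (if p < q then g p q else 0)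
      + (if q < p then g q p else 0) := by
    intro p q
    rcases lt_trichotomy p q with h | h | h
    · simp [h, h.ne, h.not_gt]
    · simp [h]
    · simp [h, h.ne', h.not_gt, hg p q]
  have h2 : ∑ p, ∑ q, g p q = ∑ p, ∑ q, ((if p = q then g p q else 0)
      + (if p < q then g p q else 0) + (if q < p then g q p else 0)) :=
    Finset.sum_congr rfl fun p _ => Finset.sum_congr rfl fun q _ => h1 p q
  rw [h2]
  simp only [Finset.sum_add_distrib]
  rw [Finset.sum_comm (f := fun p q => if q < p then g q p else 0)]
  simp only [Finset.sum_ite_eq, Finset.mem_univ, if_true]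
  ring

/-- Proposition 1 (second part): every eigenvalue of `R(b)` is either `0` or
`n(A1+A2)/2 ± h(b)`, where `h(b) = (1/2)·√((n² − 4·C(n,2))·(A1+A2)² + κ(b))` and
`κ(b) = 4·Σ_{p<q} (A1² + A2² + 2A1A2·cos(2π·φ_{pq}·(b·s0)))`. -/
theorem eigenvalues_Rmat (n : ℕ) (hn : 2 ≤ n) (φ : Fin n → ℤ) (hφ : StrictMono φ)
    (A1 A2 l0 m0 : ℝ) (hA1 : A1 = 1) (hA2 : 0 < A2) (hA2' : A2 < 1)
    (hs0 : (l0, m0) ≠ (0, 0)) (b : ℝ × ℝ)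
    (κ : ℝ)
    (hκ : κ = 4 * ∑ p : Fin n, ∑ q : Fin n, if p < q then
        A1 ^ 2 + A2 ^ 2 +
          2 * A1 * A2 * Real.cos (2 * Real.pi * ((φ q - φ p : ℤ) : ℝ) * (b.1 * l0 + b.2 * m0))
      else 0)
    (h : ℝ)
    (hh : h = (1 / 2) * Real.sqrt (((n : ℝ) ^ 2 - 4 * (n.choose 2 : ℝ)) * (A1 + A2) ^ 2 + κ))
    (μ : ℂ) (hμ : μ ∈ spectrum ℂ (Rmat n φ A1 A2 l0 m0 b)) :
    μ = 0 ∨ μ = (((n : ℝ) * (A1 + A2) / 2 + h : ℝ) : ℂ) ∨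
      μ = (((n : ℝ) * (A1 + A2) / 2 - h : ℝ) : ℂ) := by
  classical
  set x : ℝ := b.1 * l0 + b.2 * m0 with hx
  set t : Fin n → ℝ := fun p => 2 * Real.pi * (φ p : ℝ) * x with ht
  set c : ℝ := ∑ p, Real.cos (t p) with hc
  set s : ℝ := ∑ p, Real.sin (t p) with hs
  let e : Fin n → ℂ := fun p => (Real.cos (t p) : ℂ) - (Real.sin (t p) : ℂ) * Complex.I
  let f : Fin n → ℂ := fun p => (Real.cos (t p) : ℂ) + (Real.sin (t p) : ℂ) * Complex.I
  have hE : ∑ p, e p = (c : ℂ) - (s : ℂ) * Complex.I := by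
    simp only [e, hc, hs, Finset.sum_sub_distrib, Complex.ofReal_sum, Finset.sum_mul]
  have hF : ∑ p, f p = (c : ℂ) + (s : ℂ) * Complex.I := by
    simp only [f, hc, hs, Finset.sum_add_distrib, Complex.ofReal_sum, Finset.sum_mul]
  have hef : ∀ p, e p * f p = 1 := by
    intro p
    have h1 : ((Real.cos (t p) : ℂ)) ^ 2 + (Real.sin (t p) : ℂ) ^ 2 = 1 := by
      exact_mod_cast Real.cos_sq_add_sin_sq (t p)
    simp only [e, f]
    linear_combination h1 - (Real.sin (t p) : ℂ) ^ 2 * Complex.I_sq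
  have hR : ∀ p q, Rmat n φ A1 A2 l0 m0 b p q = (A1 : ℂ) + (A2 : ℂ) * (f p * e q) := by
    intro p q
    have hf' : f p = Complex.exp ((t p : ℂ) * Complex.I) := by
      rw [Complex.exp_mul_I]; simp [f]
    have he' : e q = Complex.exp (((-t q : ℝ) : ℂ) * Complex.I) := by
      rw [Complex.exp_mul_I, ← Complex.ofReal_cos, ← Complex.ofReal_sin, Real.cos_neg, Real.sin_neg]
      simp only [e]; push_cast; ring
    rw [hf', he', ← Complex.exp_add]
    simp only [Rmat, Matrix.of_apply, ← hx, ht]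
    congr 3
    push_cast
    ring
  -- the discriminant
  have hcs : ∑ p, ∑ q, Real.cos (t q - t p) = c ^ 2 + s ^ 2 := by
    simp only [Real.cos_sub, Finset.sum_add_distrib, ← Finset.sum_mul, ← Finset.mul_sum]
    rw [← hc, ← hs]; ring
  have hK : κ = 2 * ((n : ℝ) ^ 2 * (A1 ^ 2 + A2 ^ 2) + 2 * A1 * A2 * (c ^ 2 + s ^ 2)
      - n * (A1 + A2) ^ 2) := by
    have h1 := sum_symm_aux n (fun p q => A1 ^ 2 + A2 ^ 2 + 2 * A1 * A2 * Real.cos (t q - t p))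
      (by intro p q; rw [← Real.cos_neg, neg_sub])
    have h2 : κ = 4 * ∑ p : Fin n, ∑ q : Fin n, if p < q then
        A1 ^ 2 + A2 ^ 2 + 2 * A1 * A2 * Real.cos (t q - t p) else 0 := by
      rw [hκ]
      congr 1
      refine Finset.sum_congr rfl fun p _ => Finset.sum_congr rfl fun q _ => ?_
      have : 2 * Real.pi * ((φ q - φ p : ℤ) : ℝ) * x = t q - t p := by
        simp only [ht]; push_cast; ring
      rw [this]
    have h3 : ∑ p : Fin n, ∑ q : Fin n, (A1 ^ 2 + A2 ^ 2 + 2 * A1 * A2 * Real.cos (t q - t p))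
        = (n : ℝ) ^ 2 * (A1 ^ 2 + A2 ^ 2) + 2 * A1 * A2 * (c ^ 2 + s ^ 2) := by
      rw [← hcs]
      simp only [Finset.sum_add_distrib, ← Finset.mul_sum, Finset.sum_const, Finset.card_univ,
        Fintype.card_fin, nsmul_eq_mul]
      ring
    have h4 : ∑ p : Fin n, (A1 ^ 2 + A2 ^ 2 + 2 * A1 * A2 * Real.cos (t p - t p))
        = n * (A1 + A2) ^ 2 := by
      simp only [sub_self, Real.cos_zero, Finset.sum_const, Finset.card_univ,
        Fintype.card_fin, nsmul_eq_mul]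
      ring
    rw [h3, h4] at h1
    linarith
  have hD : ((n : ℝ) ^ 2 - 4 * (n.choose 2 : ℝ)) * (A1 + A2) ^ 2 + κ
      = (n : ℝ) ^ 2 * (A1 - A2) ^ 2 + 4 * A1 * A2 * (c ^ 2 + s ^ 2) := by
    rw [hK, Nat.cast_choose_two]; ring
  have hh2 : 4 * h ^ 2 = (n : ℝ) ^ 2 * (A1 - A2) ^ 2 + 4 * A1 * A2 * (c ^ 2 + s ^ 2) := by
    have h0 : 0 ≤ (n : ℝ) ^ 2 * (A1 - A2) ^ 2 + 4 * A1 * A2 * (c ^ 2 + s ^ 2) := by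
      have : 0 < A1 := by rw [hA1]; exact one_pos
      positivity
    rw [hh, hD, mul_pow, Real.sq_sqrt h0]; ring
  -- the eigenvector
  rw [← Matrix.spectrum_toLin', ← Module.End.hasEigenvalue_iff_mem_spectrum] at hμ
  obtain ⟨v, hv⟩ := hμ.exists_hasEigenvector
  have hv0 : v ≠ 0 := hv.2
  have hv1 := hv.apply_eq_smul
  set α : ℂ := ∑ q, v q with hα
  set β : ℂ := ∑ q, e q * v q with hβ
  have hrow : ∀ p, (A1 : ℂ) * α + A2 * f p * β = μ * v p := by
    intro p
    have h1 := congrFun hv1 p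
    simp only [Matrix.toLin'_apply, Matrix.mulVec, dotProduct, Pi.smul_apply, smul_eq_mul, hR] at h1
    rw [← h1, hα, hβ, Finset.mul_sum, Finset.mul_sum, ← Finset.sum_add_distrib]
    exact Finset.sum_congr rfl fun q _ => by ring
  by_cases hμ0 : μ = 0
  · exact Or.inl hμ0
  right
  have e1 : (A1 : ℂ) * n * α + A2 * ((c : ℂ) + s * Complex.I) * β = μ * α := by
    have : μ * α = ∑ p, ((A1 : ℂ) * α + A2 * β * f p) := by
      rw [hα, Finset.mul_sum]
      refine Finset.sum_congr rfl fun p _ => ?_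
      rw [← hα]
      linear_combination -hrow p
    rw [this, Finset.sum_add_distrib, ← Finset.mul_sum Finset.univ f, hF]
    simp
    ring
  have e2 : (A1 : ℂ) * ((c : ℂ) - s * Complex.I) * α + A2 * n * β = μ * β := by
    have : μ * β = ∑ p, (e p * (A1 * α) + A2 * β) := by
      rw [hβ, Finset.mul_sum]
      refine Finset.sum_congr rfl fun p _ => ?_
      rw [← hβ]
      linear_combination (-e p) * hrow p + A2 * β * hef p
    rw [this, Finset.sum_add_distrib, ← Finset.sum_mul, hE]
    simp
    ring
  have hne : ¬ (α = 0 ∧ β = 0) := by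
    rintro ⟨ha, hb⟩
    apply hv0
    funext p
    have := hrow p
    rw [ha, hb] at this
    simpa [hμ0] using this.symm
  have hquad : (μ - A1 * n) * (μ - A2 * n) = A1 * A2 * ((c : ℂ) ^ 2 + (s : ℂ) ^ 2) := by
    have q1 : ((μ - A1 * n) * (μ - A2 * n) - A1 * A2 * ((c : ℂ) ^ 2 + (s : ℂ) ^ 2)) * α = 0 := by
      linear_combination (-(μ - A2 * n)) * e1 - A2 * ((c : ℂ) + s * Complex.I) * e2
        - A1 * A2 * α * (s : ℂ) ^ 2 * Complex.I_sq
    have q2 : ((μ - A1 * n) * (μ - A2 * n) - A1 * A2 * ((c : ℂ) ^ 2 + (s : ℂ) ^ 2)) * β = 0 := by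
      linear_combination (-(μ - A1 * n)) * e2 - A1 * ((c : ℂ) - s * Complex.I) * e1
        - A1 * A2 * β * (s : ℂ) ^ 2 * Complex.I_sq
    by_contra hcon
    have hcon' := sub_ne_zero.mpr hcon
    exact hne ⟨(mul_eq_zero.mp q1).resolve_left hcon', (mul_eq_zero.mp q2).resolve_left hcon'⟩
  have hh3 : 4 * (h : ℂ) ^ 2 = (n : ℂ) ^ 2 * (A1 - A2) ^ 2
      + 4 * A1 * A2 * ((c : ℂ) ^ 2 + (s : ℂ) ^ 2) := by exact_mod_cast hh2
  have hsq : (μ - n * (A1 + A2) / 2) ^ 2 = (h : ℂ) ^ 2 := by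
    linear_combination hquad - hh3 / 4
  push_cast
  rcases sq_eq_sq_iff_eq_or_eq_neg.mp hsq with h1 | h1
  · left; linear_combination h1
  · right; linear_combination h1
end

section
/- Every 3×3 principal submatrix of R(b) is singular: for any b ∈ ℝ² and any indices 1 ≤ i < j < k ≤ n, the determinant of the 3×3 matrix with rows and columns of R(b) indexed by (i, j, k) is zero. (Lemma 2.) -/
/-- Lemma 2: every `3 × 3` principal submatrix of `R(b)` is singular. -/
theorem det_principal_3x3_Rmat_eq_zero (n : ℕ) (hn : 3 ≤ n) (φ : Fin n → ℤ)
    (hφ : StrictMono φ)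
    (A1 A2 l0 m0 : ℝ) (hA1 : A1 = 1) (hA2 : 0 < A2) (hA2' : A2 < 1)
    (hs0 : (l0, m0) ≠ (0, 0)) (b : ℝ × ℝ)
    (i j k : Fin n) (hij : i < j) (hjk : j < k) :
    ((Rmat n φ A1 A2 l0 m0 b).submatrix ![i, j, k] ![i, j, k]).det = 0 := by
  have key : ∀ p q : Fin n, Rmat n φ A1 A2 l0 m0 b p q = (A1 : ℂ) + (A2 : ℂ) *
      (Complex.exp (-2 * (Real.pi : ℂ) * Complex.I * (φ q : ℂ) *
        ((b.1 * l0 + b.2 * m0 : ℝ) : ℂ)) *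
      Complex.exp (2 * (Real.pi : ℂ) * Complex.I * (φ p : ℂ) *
        ((b.1 * l0 + b.2 * m0 : ℝ) : ℂ))) := by
    intro p q
    rw [← Complex.exp_add]
    simp only [Rmat, Matrix.of_apply]
    congr 3
    push_cast
    ring
  rw [Matrix.det_fin_three]
  simp only [Matrix.submatrix_apply, key]
  ring
end

section
/- Let h(b) = (1/2)·√( (n² − 4·C(n,2))·(A1+A2)² + κ(b) ) with κ(b) = 4·Σ_{p<q} ( A1² + A2² + 2A1A2·cos(2π·φ_{pq}·(b·s0)) ) and C(n,2) = n(n−1)/2. If h(b) > 0, then the largest eigenvalue of R(b) equals n(A1+A2)/2 + h(b) and is simple (has multiplicity one). -/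
/-- The largest (real) eigenvalue of a complex matrix. -/
noncomputable def largestEig {n : ℕ} (A : Matrix (Fin n) (Fin n) ℂ) : ℝ :=
  sSup {x : ℝ | (x : ℂ) ∈ spectrum ℂ A}

/-- The eigenspace of a complex matrix for the eigenvalue `μ`. -/
noncomputable def eigSpace {n : ℕ} (A : Matrix (Fin n) (Fin n) ℂ) (μ : ℂ) :
    Submodule ℂ (Fin n → ℂ) :=
  Module.End.eigenspace (Matrix.toLin' A) μ

/-- A symmetric double sum splits into the diagonal and twice the upper triangle. -/
lemma sum_upper {n : ℕ} (f : Fin n → Fin n → ℝ) (hf : ∀ p q, f p q = f q p) :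
    ∑ p, ∑ q, f p q = 2 * (∑ p, ∑ q, if p < q then f p q else 0) + ∑ p, f p p := by
  have h1 : ∀ p q, f p q = (if p < q then f p q else 0) + (if q < p then f q p else 0)
      + (if p = q then f p p else 0) := by
    intro p q
    rcases lt_trichotomy p q with h | h | h
    · simp [h, h.not_gt, h.ne]
    · subst h; simp
    · simp [h, h.not_gt, h.ne', hf p q]
  have h2 : ∑ p, ∑ q, f p q = ∑ p, ∑ q, ((if p < q then f p q else 0)
      + (if q < p then f q p else 0) + (if p = q then f p p else 0)) :=
    Finset.sum_congr rfl fun p _ => Finset.sum_congr rfl fun q _ => h1 p q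
  rw [h2]
  simp only [Finset.sum_add_distrib]
  rw [Finset.sum_comm (f := fun p q => if q < p then f q p else 0)]
  simp
  ring

/-- The key identity `4 h² = n² (1 + A)² - 4 A (n² - |c|²)`. -/
lemma key_id (n : ℕ) (A : ℝ) (θ : Fin n → ℝ) :
    ((n : ℝ) ^ 2 - 4 * (n.choose 2 : ℝ)) * (1 + A) ^ 2 +
      4 * (∑ p : Fin n, ∑ q : Fin n, if p < q then
        (1 ^ 2 + A ^ 2 + 2 * 1 * A * Real.cos (θ q - θ p)) else 0)
    = (n : ℝ) ^ 2 * (1 - A) ^ 2 + 4 * A * ((∑ p, Real.cos (θ p)) ^ 2 + (∑ p, Real.sin (θ p)) ^ 2) := by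
  have h1 := sum_upper (fun p q => 1 ^ 2 + A ^ 2 + 2 * 1 * A * Real.cos (θ q - θ p))
    (fun p q => by rw [← Real.cos_neg, neg_sub])
  have h2 : ∑ p, ∑ q, (1 ^ 2 + A ^ 2 + 2 * 1 * A * Real.cos (θ q - θ p)) =
      (n : ℝ) ^ 2 * (1 + A ^ 2) +
      2 * A * ((∑ p, Real.cos (θ p)) ^ 2 + (∑ p, Real.sin (θ p)) ^ 2) := by
    simp only [Real.cos_sub, Finset.sum_add_distrib, mul_add, ← Finset.mul_sum, ← Finset.sum_mul,
      Finset.sum_const, Finset.card_univ, Fintype.card_fin, nsmul_eq_mul]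
    ring
  rw [h2] at h1
  simp only [sub_self, Real.cos_zero, Finset.sum_const, Finset.card_univ, Fintype.card_fin,
    nsmul_eq_mul] at h1
  rw [Nat.cast_choose_two]
  linear_combination -2 * h1

/-- Action of the rank-two matrix. -/
lemma rank_two_mulVec {n : ℕ} (A : ℂ) (v w : Fin n → ℂ) (R : Matrix (Fin n) (Fin n) ℂ)
    (hR : ∀ p q, R p q = 1 + A * (v p * w q)) (x : Fin n → ℂ) (p : Fin n) :
    (R.mulVec x) p = (∑ q, x q) + A * (∑ q, w q * x q) * v p := by
  simp only [Matrix.mulVec, dotProduct, hR, add_mul, Finset.sum_add_distrib, one_mul,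
    Finset.mul_sum, Finset.sum_mul]
  congr 1
  exact Finset.sum_congr rfl fun q _ => by ring

/-- The spectral analysis of the rank-two matrix. -/
lemma rank_two_spec {n : ℕ} (A : ℝ) (hA : 0 < A) (hA' : A < 1) (hn : 2 ≤ n)
    (v w : Fin n → ℂ) (hvw : ∀ p, w p * v p = 1) (R : Matrix (Fin n) (Fin n) ℂ)
    (hR : ∀ p q, R p q = 1 + A * (v p * w q)) (N : ℝ)
    (hN : (∑ p, v p) * (∑ p, w p) = (N : ℂ)) (h : ℝ) (hpos : 0 < h)
    (hh : 4 * h ^ 2 = (n : ℝ) ^ 2 * (1 - A) ^ 2 + 4 * A * N) :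
    (((n : ℝ) * (1 + A) / 2 + h : ℝ) : ℂ) ∈ spectrum ℂ R ∧
    largestEig R = (n : ℝ) * (1 + A) / 2 + h ∧
    Module.finrank ℂ (eigSpace R (((n : ℝ) * (1 + A) / 2 + h : ℝ) : ℂ)) = 1 := by
  have hn0 : (2 : ℝ) ≤ n := by exact_mod_cast hn
  set L : ℝ := (n : ℝ) * (1 + A) / 2 + h with hL
  set c := ∑ p, v p with hc
  set d := ∑ p, w p with hd
  have hLpos : 0 < L := by positivity
  have hLA : 0 < L - A * n := by
    have : 0 ≤ (n : ℝ) * (1 - A) := by apply mul_nonneg <;> linarith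
    nlinarith
  have hquad : (L - n) * (L - A * n) = A * N := by rw [hL]; nlinarith
  have hLc : (L : ℂ) ≠ 0 := by exact_mod_cast hLpos.ne'
  have hac : (L : ℂ) - A * n ≠ 0 := by exact_mod_cast hLA.ne'
  have hqc : ((L : ℂ) - n) * (L - A * n) = A * (c * d) := by rw [hN]; exact_mod_cast hquad
  have hmv := rank_two_mulVec (A : ℂ) v w R hR
  -- relations for eigenvectors
  have heig : ∀ (μ : ℂ) (x : Fin n → ℂ), R.mulVec x = μ • x →
      (∀ p, μ * x p = (∑ q, x q) + A * (∑ q, w q * x q) * v p) ∧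
      (μ - n) * (∑ q, x q) = A * c * (∑ q, w q * x q) ∧
      (μ - A * n) * (∑ q, w q * x q) = d * (∑ q, x q) := by
    intro μ x hx
    have h0 : ∀ p, μ * x p = (∑ q, x q) + A * (∑ q, w q * x q) * v p := by
      intro p
      rw [← hmv, hx]; simp
    refine ⟨h0, ?_, ?_⟩
    · have h1 : ∑ p, μ * x p = ∑ p, ((∑ q, x q) + A * (∑ q, w q * x q) * v p) :=
        Finset.sum_congr rfl fun p _ => h0 p
      rw [← Finset.mul_sum, Finset.sum_add_distrib, ← Finset.mul_sum, ← hc] at h1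
      simp only [Finset.sum_const, Finset.card_univ, Fintype.card_fin, nsmul_eq_mul] at h1
      linear_combination h1
    · have h1 : ∑ p, μ * (w p * x p) = ∑ p, (w p * (∑ q, x q) + A * (∑ q, w q * x q)) :=
        Finset.sum_congr rfl fun p _ => by
          linear_combination (w p) * h0 p + A * (∑ q, w q * x q) * hvw p
      rw [← Finset.mul_sum, Finset.sum_add_distrib, ← Finset.sum_mul, ← hd] at h1
      simp only [Finset.sum_const, Finset.card_univ, Fintype.card_fin, nsmul_eq_mul] at h1
      linear_combination h1
  -- the eigenvector
  set z : Fin n → ℂ := fun p => (L - A * n) + A * d * v p with hz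
  have hz1 : ∑ p, z p = L * (L - A * n) := by
    simp only [hz, Finset.sum_add_distrib, ← Finset.mul_sum, ← hc, Finset.sum_const,
      Finset.card_univ, Fintype.card_fin, nsmul_eq_mul]
    linear_combination -hqc
  have hz2 : ∑ p, w p * z p = L * d := by
    have : ∑ p, w p * z p = ∑ p, (w p * (L - A * n) + A * d) :=
      Finset.sum_congr rfl fun p _ => by
        simp only [hz]; linear_combination A * d * hvw p
    rw [this, Finset.sum_add_distrib, ← Finset.sum_mul, ← hd]
    simp only [Finset.sum_const, Finset.card_univ, Fintype.card_fin, nsmul_eq_mul]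
    ring
  have hz0 : z ≠ 0 := by
    intro h0
    rw [h0] at hz1
    simp only [Pi.zero_apply, Finset.sum_const_zero] at hz1
    exact mul_ne_zero hLc hac hz1.symm
  have hzeig : R.mulVec z = (L : ℂ) • z := by
    funext p
    rw [hmv, hz1, hz2]
    simp only [hz, Pi.smul_apply, smul_eq_mul]
    ring
  have hspec : ∀ μ : ℂ, μ ∈ spectrum ℂ R ↔ ∃ x, x ≠ 0 ∧ R.mulVec x = μ • x := by
    intro μ
    rw [← Matrix.spectrum_toLin', ← Module.End.hasEigenvalue_iff_mem_spectrum]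
    constructor
    · intro hμ
      obtain ⟨x, hx⟩ := hμ.exists_hasEigenvector
      exact ⟨x, hx.2, by simpa using hx.apply_eq_smul⟩
    · rintro ⟨x, hx, hx'⟩
      exact Module.End.hasEigenvalue_of_hasEigenvector
        ⟨Module.End.mem_eigenspace_iff.2 (by simpa using hx'), hx⟩
  have hmem : (L : ℂ) ∈ spectrum ℂ R := (hspec _).2 ⟨z, hz0, hzeig⟩
  refine ⟨hmem, ?_, ?_⟩
  · refine IsGreatest.csSup_eq ⟨hmem, ?_⟩
    intro μ hμ
    obtain ⟨x, hx0, hx⟩ := (hspec _).1 hμ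
    obtain ⟨h0, h1, h2⟩ := heig _ _ hx
    by_cases hμ0 : μ = 0
    · rw [hμ0]; exact hLpos.le
    have hμc : (μ : ℂ) ≠ 0 := by exact_mod_cast hμ0
    have hq : ((μ : ℂ) - n) * (μ - A * n) = A * N := by
      by_contra hne
      have hne' : ((μ : ℂ) - n) * (μ - A * n) - A * N ≠ 0 := sub_ne_zero.2 hne
      have ha : ∑ q, x q = 0 := by
        refine (mul_eq_zero.1 (?_ : (((μ : ℂ) - n) * (μ - A * n) - A * N) * _ = 0)).resolve_left hne'
        linear_combination (μ - A * n) * h1 + A * c * h2 + A * (∑ q, x q) * hN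
      have hb : ∑ q, w q * x q = 0 := by
        refine (mul_eq_zero.1 (?_ : (((μ : ℂ) - n) * (μ - A * n) - A * N) * _ = 0)).resolve_left hne'
        linear_combination (μ - n) * h2 + d * h1 + A * (∑ q, w q * x q) * hN
      apply hx0
      funext p
      have := h0 p
      rw [ha, hb] at this
      simpa [hμ0] using this
    have hqr : (μ - n) * (μ - A * n) = A * N := by exact_mod_cast hq
    rw [hL]
    have : (μ - n * (1 + A) / 2) ^ 2 = h ^ 2 := by nlinarith
    have := abs_le_of_sq_le_sq' this.le hpos.le
    linarith [this.2]
  · rw [finrank_eq_one_iff']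
    have hmemE : ∀ x, x ∈ eigSpace R (L : ℂ) ↔ R.mulVec x = (L : ℂ) • x := by
      intro x
      simp [eigSpace]
    refine ⟨⟨z, (hmemE z).2 hzeig⟩, fun h0 => hz0 (congrArg Subtype.val h0), ?_⟩
    rintro ⟨x, hx⟩
    obtain ⟨h0, -, h2⟩ := heig _ _ ((hmemE x).1 hx)
    refine ⟨(∑ q, x q) / (L * (L - A * n)), Subtype.ext ?_⟩
    funext p
    have h3 := h0 p
    simp only [SetLike.mk_smul_mk, Pi.smul_apply, smul_eq_mul]
    rw [div_mul_eq_mul_div, div_eq_iff (mul_ne_zero hLc hac)]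
    simp only [hz]
    linear_combination -(L - A * n) * h3 - A * v p * h2

/-- If `h(b) > 0`, where `h(b) = (1/2)·√((n² − 4·C(n,2))·(A1+A2)² + κ(b))` and
`κ(b) = 4·Σ_{p<q} (A1² + A2² + 2A1A2·cos(2π·φ_{pq}·(b·s0)))`, then the largest
eigenvalue of `R(b)` equals `n(A1+A2)/2 + h(b)`, it is indeed an eigenvalue, and it is
simple (its eigenspace has dimension one). -/
theorem largestEig_eq_and_simple (n : ℕ) (hn : 2 ≤ n) (φ : Fin n → ℤ) (hφ : StrictMono φ)
    (A1 A2 l0 m0 : ℝ) (hA1 : A1 = 1) (hA2 : 0 < A2) (hA2' : A2 < 1)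
    (hs0 : (l0, m0) ≠ (0, 0)) (b : ℝ × ℝ)
    (κ : ℝ)
    (hκ : κ = 4 * ∑ p : Fin n, ∑ q : Fin n, if p < q then
        A1 ^ 2 + A2 ^ 2 +
          2 * A1 * A2 * Real.cos (2 * Real.pi * ((φ q - φ p : ℤ) : ℝ) * (b.1 * l0 + b.2 * m0))
      else 0)
    (h : ℝ)
    (hh : h = (1 / 2) * Real.sqrt (((n : ℝ) ^ 2 - 4 * (n.choose 2 : ℝ)) * (A1 + A2) ^ 2 + κ))
    (hpos : 0 < h) :
    (((n : ℝ) * (A1 + A2) / 2 + h : ℝ) : ℂ) ∈ spectrum ℂ (Rmat n φ A1 A2 l0 m0 b) ∧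
    largestEig (Rmat n φ A1 A2 l0 m0 b) = (n : ℝ) * (A1 + A2) / 2 + h ∧
    Module.finrank ℂ
      (eigSpace (Rmat n φ A1 A2 l0 m0 b) (((n : ℝ) * (A1 + A2) / 2 + h : ℝ) : ℂ)) = 1 := by
  subst hA1
  set t : ℝ := b.1 * l0 + b.2 * m0 with ht
  set θ : Fin n → ℝ := fun p => 2 * Real.pi * (φ p : ℝ) * t with hθ
  have hcs : ∀ p, Complex.exp (-(θ p) * Complex.I) * Complex.exp (θ p * Complex.I) = 1 := by
    intro p
    rw [← Complex.exp_add]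
    simp
  refine rank_two_spec A2 hA2 hA2' hn (fun p => Complex.exp (θ p * Complex.I))
    (fun p => Complex.exp (-(θ p) * Complex.I)) hcs _ ?_
    ((∑ p, Real.cos (θ p)) ^ 2 + (∑ p, Real.sin (θ p)) ^ 2) ?_ h hpos ?_
  · intro p q
    simp only [Rmat, Matrix.of_apply, ← Complex.exp_add, hθ]
    rw [Complex.ofReal_one]
    congr 3
    rw [← ht]
    push_cast
    ring
  · have e1 : ∀ p, Complex.exp (-(θ p) * Complex.I) =
        (Real.cos (θ p) : ℂ) - (Real.sin (θ p) : ℂ) * Complex.I := by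
      intro p
      rw [Complex.exp_mul_I, Complex.cos_neg, Complex.sin_neg]
      push_cast
      ring
    have e2 : ∀ p, Complex.exp (θ p * Complex.I) =
        (Real.cos (θ p) : ℂ) + (Real.sin (θ p) : ℂ) * Complex.I := by
      intro p
      rw [Complex.exp_mul_I]
      push_cast
      ring
    simp only [e1, e2, Finset.sum_add_distrib, Finset.sum_sub_distrib, ← Finset.sum_mul,
      ← Complex.ofReal_sum]
    push_cast
    linear_combination -(∑ p, Complex.sin (θ p)) ^ 2 * Complex.I_sq
  · have hk := key_id n A2 θ
    have hcos : ∀ p q, Real.cos (2 * Real.pi * ((φ q - φ p : ℤ) : ℝ) * t)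
        = Real.cos (θ q - θ p) := by
      intro p q
      congr 1
      simp only [hθ]
      push_cast
      ring
    simp only [hcos] at hκ
    rw [← hκ] at hk
    rw [← hk]
    have hnn : 0 ≤ ((n : ℝ) ^ 2 - 4 * (n.choose 2 : ℝ)) * (1 + A2) ^ 2 + κ := by
      rw [hk]
      positivity
    rw [hh, mul_pow, Real.sq_sqrt hnn]
    ring
end

section
/- Assume l0 ≠ 0 and m0 ≠ 0, and that for every b ∈ ℝ² the largest eigenvalue λ(b) of R(b) is simple. Then each entry g_{pq} of the ALS calibration matrix G(b) = λ(b)·P(b) is doubly periodic and effectively one-dimensional: g_{pq}(u + j/l0, v + k/m0) = g_{pq}(u, v) for all integers j, k and all real u, v, and g_{pq}(u, −(l0/m0)u + c) = g_{pq}(0, c) for all real u, c. (Proposition 2, periodicity part.) -/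
theorem proj_mul_of_range {n : ℕ} (P Q : Matrix (Fin n) (Fin n) ℂ) (hP : P * P = P)
    (h : LinearMap.range (Matrix.toLin' Q) ≤ LinearMap.range (Matrix.toLin' P)) :
    P * Q = Q := by
  apply Matrix.toLin'.injective
  apply LinearMap.ext
  intro x
  obtain ⟨y, hy⟩ := h ⟨x, rfl⟩
  rw [Matrix.toLin'_mul, LinearMap.comp_apply, ← hy, ← LinearMap.comp_apply,
    ← Matrix.toLin'_mul, hP]

theorem proj_unique {n : ℕ} (P Q : Matrix (Fin n) (Fin n) ℂ)
    (hP : P * P = P) (hQ : Q * Q = Q) (hPh : P.IsHermitian) (hQh : Q.IsHermitian)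
    (h : LinearMap.range (Matrix.toLin' P) = LinearMap.range (Matrix.toLin' Q)) : P = Q := by
  have h1 := proj_mul_of_range P Q hP h.ge
  have h2 := proj_mul_of_range Q P hQ h.le
  have h3 := congrArg Matrix.conjTranspose h1
  rw [Matrix.conjTranspose_mul, hPh.eq, hQh.eq] at h3
  exact h2.symm.trans h3

theorem Rmat_congr (n : ℕ) (φ : Fin n → ℤ) (A1 A2 l0 m0 : ℝ) (b b' : ℝ × ℝ) (N : ℤ)
    (h : b.1 * l0 + b.2 * m0 = b'.1 * l0 + b'.2 * m0 + N) :
    Rmat n φ A1 A2 l0 m0 b = Rmat n φ A1 A2 l0 m0 b' := by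
  ext p q
  simp only [Rmat, Matrix.of_apply]
  congr 2
  rw [Complex.exp_eq_exp_iff_exists_int]
  refine ⟨-((φ q - φ p) * N), ?_⟩
  rw [h]
  push_cast
  ring

/-- Proposition 2 (periodicity part): assume `l0 ≠ 0`, `m0 ≠ 0`, and that the largest
eigenvalue `λ(b)` of `R(b)` is simple for every `b`.  Let `P(b)` be the orthogonal
spectral projector onto the eigenspace of `λ(b)` (the Hermitian idempotent matrix whose
range is that eigenspace), and let `G(b) = λ(b)·P(b)` be the ALS calibration matrix.
Then each entry `g_{pq}` of `G` is doubly periodic,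
`g_{pq}(u + j/l0, v + k/m0) = g_{pq}(u, v)`, and effectively one-dimensional,
`g_{pq}(u, −(l0/m0)u + c) = g_{pq}(0, c)`. -/
theorem ALS_entries_periodic_one_dimensional (n : ℕ) (hn : 2 ≤ n)
    (φ : Fin n → ℤ) (hφ : StrictMono φ)
    (A1 A2 l0 m0 : ℝ) (hA1 : A1 = 1) (hA2 : 0 < A2) (hA2' : A2 < 1)
    (hl0 : l0 ≠ 0) (hm0 : m0 ≠ 0)
    (hsimple : ∀ b : ℝ × ℝ,
      Module.finrank ℂ
        (eigSpace (Rmat n φ A1 A2 l0 m0 b) ((largestEig (Rmat n φ A1 A2 l0 m0 b) : ℝ) : ℂ))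
        = 1)
    (P : ℝ × ℝ → Matrix (Fin n) (Fin n) ℂ)
    (hP : ∀ b : ℝ × ℝ, (P b).IsHermitian ∧ P b * P b = P b ∧
      LinearMap.range (Matrix.toLin' (P b)) =
        eigSpace (Rmat n φ A1 A2 l0 m0 b) ((largestEig (Rmat n φ A1 A2 l0 m0 b) : ℝ) : ℂ))
    (G : ℝ × ℝ → Matrix (Fin n) (Fin n) ℂ)
    (hG : ∀ b : ℝ × ℝ, G b = ((largestEig (Rmat n φ A1 A2 l0 m0 b) : ℝ) : ℂ) • P b) :
    (∀ (u v : ℝ) (j k : ℤ) (p q : Fin n),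
      G (u + j / l0, v + k / m0) p q = G (u, v) p q) ∧
    (∀ (u c : ℝ) (p q : Fin n),
      G (u, -(l0 / m0) * u + c) p q = G (0, c) p q) := by
  have key : ∀ (b b' : ℝ × ℝ) (N : ℤ),
      b.1 * l0 + b.2 * m0 = b'.1 * l0 + b'.2 * m0 + N → G b = G b' := by
    intro b b' N h
    have hR := Rmat_congr n φ A1 A2 l0 m0 b b' N h
    obtain ⟨h1, h2, h3⟩ := hP b
    obtain ⟨h1', h2', h3'⟩ := hP b'
    rw [hR] at h3
    rw [hG b, hG b', hR, proj_unique (P b) (P b') h2 h2' h1 h1' (h3.trans h3'.symm)]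
  constructor
  · intro u v j k p q
    rw [key (u + j / l0, v + k / m0) (u, v) (j + k)]
    push_cast
    field_simp
    ring
  · intro u c p q
    rw [key (u, -(l0 / m0) * u + c) (0, c) 0]
    push_cast
    field_simp
    ring
end

section
/- The off-diagonal two-dimensional Fourier coefficients of a periodic, effectively one-dimensional function vanish: under the stated hypotheses on f, the coefficients c_{jk} = |l0||m0| · ∫_{−1/(2|m0|)}^{1/(2|m0|)} ∫_{−1/(2|l0|)}^{1/(2|l0|)} f(u, v) · exp(−2πi(j·u·l0 + k·v·m0)) du dv satisfy c_{jk} = 0 whenever j ≠ k. (Key step of Proposition 3.) -/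
open MeasureTheory

theorem aux_swap (F : ℝ → ℝ → ℂ) (hF : Continuous (Function.uncurry F)) (a b c d : ℝ)
    (hab : a ≤ b) (hcd : c ≤ d) :
    ∫ v in a..b, ∫ u in c..d, F v u = ∫ u in c..d, ∫ v in a..b, F v u := by
  simp only [intervalIntegral.integral_of_le hab, intervalIntegral.integral_of_le hcd]
  apply MeasureTheory.integral_integral_swap
  rw [Measure.prod_restrict]
  have : IntegrableOn (Function.uncurry F) (Set.Icc a b ×ˢ Set.Icc c d) (volume.prod volume) :=
    hF.continuousOn.integrableOn_compact (isCompact_Icc.prod isCompact_Icc)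
  exact this.mono_set (Set.prod_mono Set.Ioc_subset_Icc_self Set.Ioc_subset_Icc_self)

/-- Key step of Proposition 3: for a continuously differentiable function `f : ℝ² → ℂ`
that is doubly periodic with periods `1/l0` and `1/m0`, effectively one-dimensional
(constant along the lines `v = −(l0/m0)u + c`), and Hermitian
(`f(−u,−v) = conj (f(u,v))`), the off-diagonal two-dimensional Fourier coefficients
`c_{jk} = |l0||m0| ∫∫ f(u,v)·exp(−2πi(j·u·l0 + k·v·m0)) du dv` vanish for `j ≠ k`. -/
theorem offdiag_fourier_coeff_vanish (l0 m0 : ℝ) (hl0 : l0 ≠ 0) (hm0 : m0 ≠ 0)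
    (f : ℝ × ℝ → ℂ) (hf : ContDiff ℝ 1 f)
    (hper : ∀ (u v : ℝ) (j k : ℤ), f (u + j / l0, v + k / m0) = f (u, v))
    (hline : ∀ u c : ℝ, f (u, -(l0 / m0) * u + c) = f (0, c))
    (hherm : ∀ u v : ℝ, f (-u, -v) = starRingEnd ℂ (f (u, v)))
    (j k : ℤ) (hjk : j ≠ k) :
    ((|l0| * |m0| : ℝ) : ℂ) *
      ∫ v in (-(1 / (2 * |m0|)))..(1 / (2 * |m0|)),
        ∫ u in (-(1 / (2 * |l0|)))..(1 / (2 * |l0|)),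
          f (u, v) *
            Complex.exp (-2 * (Real.pi : ℂ) * Complex.I *
              ((j : ℂ) * (u : ℂ) * (l0 : ℂ) + (k : ℂ) * (v : ℂ) * (m0 : ℂ))) = 0 := by
  have hl : 0 < |l0| := abs_pos.mpr hl0
  have hm : 0 < |m0| := abs_pos.mpr hm0
  have hcl : (l0 : ℂ) ≠ 0 := by exact_mod_cast hl0
  have hcm : (m0 : ℂ) ≠ 0 := by exact_mod_cast hm0
  have hfc : Continuous f := hf.continuous
  set E : ℝ → ℂ := fun w => Complex.exp (-2 * (Real.pi : ℂ) * Complex.I * ((k : ℂ) * w * m0)) with hE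
  set H : ℝ → ℂ := fun w => f (0, w) * E w with hH
  have hHp0 : Function.Periodic H (1 / m0) := by
    intro w
    have h1 : f (0, w + 1 / m0) = f (0, w) := by
      have := hper 0 w 0 1
      simpa using this
    have h2 : E (w + 1 / m0) = E w := by
      simp only [hE]
      rw [Complex.exp_eq_exp_iff_exists_int]
      refine ⟨-k, ?_⟩
      push_cast
      field_simp
      ring
    simp only [hH, h1, h2]
  have hHp : Function.Periodic H (1 / |m0|) := by
    rcases abs_choice m0 with h | h
    · rw [h]; exact hHp0
    · rw [h, one_div, inv_neg, ← one_div]; exact hHp0.neg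
  have key : ∀ u v : ℝ, f (u, v) * Complex.exp (-2 * (Real.pi : ℂ) * Complex.I *
      ((j : ℂ) * (u : ℂ) * (l0 : ℂ) + (k : ℂ) * (v : ℂ) * (m0 : ℂ))) =
      Complex.exp ((-2 * (Real.pi : ℂ) * Complex.I * (j - k) * l0) * u) *
        H (v + l0 / m0 * u) := by
    intro u v
    have h1 : f (u, v) = f (0, v + l0 / m0 * u) := by
      rw [← hline u]
      congr 2
      ring
    rw [h1]
    simp only [hH, hE]
    rw [mul_left_comm, ← Complex.exp_add]
    congr 2
    push_cast
    field_simp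
    ring
  rw [aux_swap (fun v u => f (u, v) * Complex.exp (-2 * (Real.pi : ℂ) * Complex.I *
      ((j : ℂ) * (u : ℂ) * (l0 : ℂ) + (k : ℂ) * (v : ℂ) * (m0 : ℂ))))
      (by unfold Function.uncurry; fun_prop) _ _ _ _
      (neg_le_self (by positivity)) (neg_le_self (by positivity))]
  have hC : ∀ s : ℝ, ∫ v in (-(1 / (2 * |m0|)))..(1 / (2 * |m0|)), H (v + s) =
      ∫ v in (0 : ℝ)..(0 + 1 / |m0|), H v := by
    intro s
    rw [intervalIntegral.integral_comp_add_right, ← hHp.intervalIntegral_add_eq (-(1 / (2 * |m0|)) + s)]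
    congr 1
    field_simp
    ring
  simp only [key, intervalIntegral.integral_const_mul, hC, intervalIntegral.integral_mul_const]
  have hjk' : (j : ℂ) - k ≠ 0 := sub_ne_zero.mpr (by exact_mod_cast hjk)
  rw [integral_exp_mul_complex (by simp [hjk', hcl, Real.pi_ne_zero])]
  have hexp : Complex.exp ((-2 * (Real.pi : ℂ) * Complex.I * (j - k) * l0) * ((1 / (2 * |l0|) : ℝ) : ℂ)) =
      Complex.exp ((-2 * (Real.pi : ℂ) * Complex.I * (j - k) * l0) * ((-(1 / (2 * |l0|)) : ℝ) : ℂ)) := by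
    rw [Complex.exp_eq_exp_iff_exists_int]
    rcases abs_choice l0 with h | h
    · refine ⟨k - j, ?_⟩
      rw [h]
      push_cast
      field_simp
      ring
    · refine ⟨j - k, ?_⟩
      rw [h]
      push_cast
      field_simp
      ring
  rw [hexp]
  simp
end

section
/- A periodic, effectively one-dimensional, Hermitian, continuously differentiable function admits a one-dimensional Fourier-series representation: under the stated hypotheses on f, there exist real numbers c_j (j ∈ ℤ), given by c_j = |l0||m0| · ∫_{−1/(2|m0|)}^{1/(2|m0|)} ∫_{−1/(2|l0|)}^{1/(2|l0|)} f(u, v) · exp(−2πi·j·(u·l0 + v·m0)) du dv, such that f(u, v) = Σ_{j=−∞}^{∞} c_j · exp(2πi·j·(u·l0 + v·m0)) for all real u, v, with the series converging. (Proposition 3.) -/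
open MeasureTheory

lemma aux_coeffOn (h : ℝ → ℂ) (n : ℤ) :
    fourierCoeffOn (zero_lt_one (α := ℝ)) h n =
      ∫ t in (0:ℝ)..1, h t * Complex.exp (-2 * (Real.pi : ℂ) * Complex.I * (n : ℂ) * (t : ℂ)) := by
  rw [fourierCoeffOn_eq_integral]
  simp only [fourier_coe_apply, smul_eq_mul, sub_zero, div_one, one_smul]
  refine intervalIntegral.integral_congr fun t _ => ?_
  beta_reduce
  rw [mul_comm]
  congr 2
  push_cast
  ring

lemma aux_coeff (g : ℝ → ℂ) (hp : Function.Periodic g 1) (n : ℤ) :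
    fourierCoeff (T := (1:ℝ)) (hp.lift : AddCircle (1:ℝ) → ℂ) n =
      ∫ t in (0:ℝ)..1, g t * Complex.exp (-2 * (Real.pi : ℂ) * Complex.I * (n : ℂ) * (t : ℂ)) := by
  rw [fourierCoeff_eq_intervalIntegral _ _ 0]
  simp only [fourier_coe_apply, smul_eq_mul, div_one, one_smul, zero_add]
  refine intervalIntegral.integral_congr fun t _ => ?_
  beta_reduce
  rw [mul_comm]
  congr 2
  push_cast
  ring

lemma aux_summable (g : ℝ → ℂ) (hg : ContDiff ℝ 1 g) (hp : Function.Periodic g 1) :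
    Summable fun n : ℤ =>
      ∫ t in (0:ℝ)..1, g t * Complex.exp (-2 * (Real.pi : ℂ) * Complex.I * (n : ℂ) * (t : ℂ)) := by
  simp_rw [← aux_coeffOn]
  have hc : Continuous (deriv g) := hg.continuous_deriv le_rfl
  have hL : MemLp (deriv g) 2 (volume.restrict (Set.Ioc (0:ℝ) 1)) := by
    obtain ⟨C, hC⟩ := isCompact_Icc.exists_bound_of_continuousOn (s := Set.Icc (0:ℝ) 1)
      hc.continuousOn
    refine MemLp.of_bound hc.aestronglyMeasurable C ?_
    exact (ae_restrict_iff' measurableSet_Ioc).mpr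
      (Filter.Eventually.of_forall fun x hx => hC x (Set.Ioc_subset_Icc_self hx))
  have hs := (hasSum_sq_fourierCoeffOn (zero_lt_one (α := ℝ)) hL).summable
  have h2 : Summable fun n : ℤ => 1 / (n : ℝ) ^ 2 :=
    Real.summable_one_div_int_pow.mpr one_lt_two
  refine Summable.of_norm_bounded_eventually (h2.add hs) ?_
  have hfin : ∀ᶠ n : ℤ in Filter.cofinite, n ≠ 0 := by
    exact (Set.finite_singleton (0:ℤ)).compl_mem_cofinite
  filter_upwards [hfin] with n hn
  rw [fourierCoeffOn_of_hasDerivAt (zero_lt_one (α := ℝ)) hn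
    (fun x _ => (hg.differentiable one_ne_zero x).hasDerivAt) (hc.intervalIntegrable _ _)]
  have h01 : g 1 = g 0 := by simpa using hp 0
  set b := fourierCoeffOn (zero_lt_one (α := ℝ)) (deriv g) n
  have hn' : (0:ℝ) < |(n:ℝ)| := by positivity
  have hpi : 1 ≤ 2 * Real.pi := by linarith [Real.pi_gt_three]
  have : ‖1 / (-2 * (Real.pi : ℂ) * Complex.I * n) *
      (fourier (-n) ((0:ℝ) : AddCircle ((1:ℝ) - 0)) * (g 1 - g 0) - ((1:ℝ) - (0:ℝ)) * b)‖
      = (2 * Real.pi)⁻¹ * (|(n:ℝ)|⁻¹ * ‖b‖) := by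
    rw [h01]
    simp [abs_of_pos Real.pi_pos]
    ring
  rw [this]
  have h3 : |(n:ℝ)|⁻¹ ^ 2 = 1 / (n:ℝ)^2 := by rw [inv_pow, sq_abs, one_div]
  have h4 : (2 * Real.pi)⁻¹ ≤ 1 := inv_le_one_of_one_le₀ hpi
  have h5 : 0 ≤ |(n:ℝ)|⁻¹ * ‖b‖ := by positivity
  rw [← h3]
  nlinarith [sq_nonneg (|(n:ℝ)|⁻¹ - ‖b‖), mul_le_mul_of_nonneg_right h4 h5]

lemma aux_hasSum (g : ℝ → ℂ) (hg : ContDiff ℝ 1 g) (hp : Function.Periodic g 1) (x : ℝ) :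
    HasSum (fun n : ℤ =>
      (∫ t in (0:ℝ)..1, g t * Complex.exp (-2 * (Real.pi : ℂ) * Complex.I * (n : ℂ) * (t : ℂ))) *
      Complex.exp (2 * (Real.pi : ℂ) * Complex.I * (n : ℂ) * (x : ℂ))) (g x) := by
  have hcont : Continuous (hp.lift : AddCircle (1:ℝ) → ℂ) :=
    continuous_coinduced_dom.mpr hg.continuous
  let G : C(AddCircle (1:ℝ), ℂ) := ⟨hp.lift, hcont⟩
  have hco : fourierCoeff G = fun n : ℤ =>
      ∫ t in (0:ℝ)..1, g t * Complex.exp (-2 * (Real.pi : ℂ) * Complex.I * (n : ℂ) * (t : ℂ)) :=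
    funext fun n => aux_coeff g hp n
  have := has_pointwise_sum_fourier_series_of_summable (f := G)
    (by rw [hco]; exact aux_summable g hg hp) (x : AddCircle (1:ℝ))
  rw [hco] at this
  have hx : G (x : AddCircle (1:ℝ)) = g x := rfl
  rw [hx] at this
  simpa [fourier_coe_apply] using this

lemma aux_real (g : ℝ → ℂ) (hp : Function.Periodic g 1)
    (hh : ∀ t, g (-t) = starRingEnd ℂ (g t)) (n : ℤ) (E : ℝ → ℂ)
    (hE : E = fun t => g t * Complex.exp (-2 * (Real.pi : ℂ) * Complex.I * (n : ℂ) * (t : ℂ)))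
    (hEp : Function.Periodic E 1) :
    starRingEnd ℂ (∫ t in (0:ℝ)..1, E t) = ∫ t in (0:ℝ)..1, E t := by
  have hconj : ∀ t, starRingEnd ℂ (E t) = E (-t) := by
    intro t
    have h2 : starRingEnd ℂ (2:ℂ) = 2 := Complex.conj_ofNat 2
    simp [hE, hh, ← Complex.exp_conj, h2]
  rw [← intervalIntegral.intervalIntegral_conj]
  simp_rw [hconj]
  rw [intervalIntegral.integral_comp_neg]
  have := hEp.intervalIntegral_add_eq (-1) 0
  simpa using this

lemma aux_E_per (g : ℝ → ℂ) (hp : Function.Periodic g 1) (n : ℤ) :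
    Function.Periodic (fun t : ℝ => g t *
      Complex.exp (-2 * (Real.pi : ℂ) * Complex.I * (n : ℂ) * (t : ℂ))) 1 := by
  intro t
  simp only [hp t]
  congr 1
  rw [Complex.exp_eq_exp_iff_exists_int]
  refine ⟨-n, ?_⟩
  push_cast
  ring

lemma aux_scale (E : ℝ → ℂ) (hE : Function.Periodic E 1) (l d : ℝ) (hl : l ≠ 0) :
    ∫ u in (-(1 / (2 * |l|)))..(1 / (2 * |l|)), E (u * l + d) =
      ((|l|⁻¹ : ℝ) : ℂ) * ∫ t in (0:ℝ)..1, E t := by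
  have h0 : ∀ s : ℝ, ∫ t in s..(s+1), E t = ∫ t in (0:ℝ)..1, E t := fun s => by
    simpa using hE.intervalIntegral_add_eq s 0
  simp_rw [mul_comm _ l]
  rw [intervalIntegral.integral_comp_mul_add _ hl]
  rcases lt_or_gt_of_ne hl with h | h
  · rw [abs_of_neg h, intervalIntegral.integral_symm]
    have e1 : l * -(1 / (2 * -l)) + d = (l * (1 / (2 * -l)) + d) + 1 := by field_simp; ring
    rw [e1, h0]
    simp [inv_neg]
  · rw [abs_of_pos h]
    have e1 : l * (1 / (2 * l)) + d = (l * -(1 / (2 * l)) + d) + 1 := by field_simp; ring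
    rw [e1, h0]
    simp


/-- Proposition 3: a continuously differentiable function `f : ℝ² → ℂ` that is doubly
periodic with periods `1/l0` and `1/m0`, effectively one-dimensional (constant along
the lines `v = −(l0/m0)u + c`), and Hermitian (`f(−u,−v) = conj (f(u,v))`) admits an
effectively one-dimensional Fourier-series representation
`f(u,v) = Σ_{j∈ℤ} c_j · exp(2πi·j·(u·l0 + v·m0))` with real coefficients
`c_j = |l0||m0| ∫∫ f(u,v)·exp(−2πi·j·(u·l0 + v·m0)) du dv`, the series converging. -/
theorem one_dimensional_fourier_series (l0 m0 : ℝ) (hl0 : l0 ≠ 0) (hm0 : m0 ≠ 0)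
    (f : ℝ × ℝ → ℂ) (hf : ContDiff ℝ 1 f)
    (hper : ∀ (u v : ℝ) (j k : ℤ), f (u + j / l0, v + k / m0) = f (u, v))
    (hline : ∀ u c : ℝ, f (u, -(l0 / m0) * u + c) = f (0, c))
    (hherm : ∀ u v : ℝ, f (-u, -v) = starRingEnd ℂ (f (u, v))) :
    ∃ c : ℤ → ℝ,
      (∀ j : ℤ, ((c j : ℝ) : ℂ) =
        ((|l0| * |m0| : ℝ) : ℂ) *
          ∫ v in (-(1 / (2 * |m0|)))..(1 / (2 * |m0|)),
            ∫ u in (-(1 / (2 * |l0|)))..(1 / (2 * |l0|)),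
              f (u, v) *
                Complex.exp (-2 * (Real.pi : ℂ) * Complex.I * (j : ℂ) *
                  ((u : ℂ) * (l0 : ℂ) + (v : ℂ) * (m0 : ℂ)))) ∧
      (∀ u v : ℝ,
        HasSum
          (fun j : ℤ => ((c j : ℝ) : ℂ) *
            Complex.exp (2 * (Real.pi : ℂ) * Complex.I * (j : ℂ) *
              ((u : ℂ) * (l0 : ℂ) + (v : ℂ) * (m0 : ℂ))))
          (f (u, v))) := by
  let g : ℝ → ℂ := fun t => f (0, t / m0)
  have hg : ContDiff ℝ 1 g := hf.comp (by fun_prop)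
  have hp : Function.Periodic g 1 := fun t => by
    have := hper 0 (t / m0) 0 1
    simpa [g, add_div] using this
  have hh : ∀ t, g (-t) = starRingEnd ℂ (g t) := fun t => by
    have := hherm 0 (t / m0)
    simpa [g, neg_div] using this
  have hfg : ∀ u v : ℝ, f (u, v) = g (u * l0 + v * m0) := fun u v => by
    have := hline u (v + l0 / m0 * u)
    have e1 : -(l0 / m0) * u + (v + l0 / m0 * u) = v := by ring
    have e2 : (u * l0 + v * m0) / m0 = v + l0 / m0 * u := by field_simp; ring
    rw [e1] at this
    simp only [g, e2, this]
  let E : ℤ → ℝ → ℂ := fun n t =>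
    g t * Complex.exp (-2 * (Real.pi : ℂ) * Complex.I * (n : ℂ) * (t : ℂ))
  have hE : ∀ n, Function.Periodic (E n) 1 := fun n => aux_E_per g hp n
  have hre : ∀ n, (((∫ t in (0:ℝ)..1, E n t).re : ℝ) : ℂ) = ∫ t in (0:ℝ)..1, E n t := fun n =>
    Complex.conj_eq_iff_re.mp (aux_real g hp hh n (E n) rfl (hE n))
  refine ⟨fun n => (∫ t in (0:ℝ)..1, E n t).re, fun j => ?_, fun u v => ?_⟩
  · rw [hre]
    have key : ∀ u v : ℝ, f (u, v) * Complex.exp (-2 * (Real.pi : ℂ) * Complex.I * (j : ℂ) *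
        ((u : ℂ) * (l0 : ℂ) + (v : ℂ) * (m0 : ℂ))) = E j (u * l0 + v * m0) := fun u v => by
      simp only [E, hfg]
      push_cast
      rfl
    simp_rw [key, aux_scale (E j) (hE j) l0 _ hl0]
    have e : (1 / (2 * |m0|)) - -(1 / (2 * |m0|)) = |m0|⁻¹ := by field_simp; ring
    rw [intervalIntegral.integral_const, e, Complex.real_smul]
    have h1 : ((|l0| : ℝ) : ℂ) ≠ 0 := by simpa using hl0
    have h2 : ((|m0| : ℝ) : ℂ) ≠ 0 := by simpa using hm0
    push_cast
    field_simp
  · have := aux_hasSum g hg hp (u * l0 + v * m0)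
    simp only [hre, hfg u v]
    push_cast at this
    exact this
end
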